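/- CVaR_p is convex with respect to mixtures of distributions: let μ₁, μ₂ be Borel probability measures on ℝ such that the identity function is integrable with respect to both, let λ ∈ [0,1], let μ_λ := λ·μ₁ + (1−λ)·μ₂, and let p ∈ (0,1). Then CVaR_p(μ_λ) ≤ λ·CVaR_p(μ₁) + (1−λ)·CVaR_p(μ₂). In particular, the CVaR of a convex combination of two strategies can be strictly worse than the corresponding convex combination of their CVaRs, but never better. -/

import Mathlib

open MeasureTheory Set

/-- The cumulative distribution function of a Borel measure on ℝ:
`F_μ(r) = μ((-∞, r])`. -/
noncomputable def mcdf (μ : Measure ℝ) (r : ℝ) : ℝ := (μ (Iic r)).toReal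

/-- The value-at-risk `VaR_p(μ) = sSup {r | F_μ(r) ≤ p}`. -/
noncomputable def valueAtRisk (p : ℝ) (μ : Measure ℝ) : ℝ :=
  sSup {r : ℝ | mcdf μ r ≤ p}

/-- The conditional value-at-risk: with `v = VaR_p(μ)`,
`CVaR_p(μ) = (1/p)·(∫_{(-∞,v)} x dμ + (p − μ((-∞,v)))·v)`. -/
noncomputable def cvar (p : ℝ) (μ : Measure ℝ) : ℝ :=
  (1 / p) * ((∫ x in Iio (valueAtRisk p μ), x ∂μ) +
    (p - (μ (Iio (valueAtRisk p μ))).toReal) * valueAtRisk p μ)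

open Filter Topology in
theorem var_bounds (μ : Measure ℝ) [IsProbabilityMeasure μ] (p : ℝ) (hp : p ∈ Set.Ioo (0 : ℝ) 1) :
    μ.real (Iio (valueAtRisk p μ)) ≤ p ∧ p ≤ μ.real (Iic (valueAtRisk p μ)) := by
  have hc : ∀ r, mcdf μ r = ProbabilityTheory.cdf μ r := fun r => by
    rw [ProbabilityTheory.cdf_eq_real]; rfl
  have hmono := ProbabilityTheory.monotone_cdf μ
  have hne : {r : ℝ | mcdf μ r ≤ p}.Nonempty := by
    obtain ⟨r, hr⟩ := ((ProbabilityTheory.tendsto_cdf_atBot μ).eventually_le_const hp.1).exists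
    exact ⟨r, by simpa [hc] using hr⟩
  have hbd : BddAbove {r : ℝ | mcdf μ r ≤ p} := by
    obtain ⟨r, hr⟩ := ((ProbabilityTheory.tendsto_cdf_atTop μ).eventually_const_lt hp.2).exists
    refine ⟨r, fun s hs => ?_⟩
    by_contra! h
    have h1 := hmono h.le
    simp only [mem_ofPred_eq, hc] at hs
    linarith
  set v := valueAtRisk p μ with hv
  have hlt : ∀ r < v, ProbabilityTheory.cdf μ r ≤ p := fun r hr => by
    obtain ⟨s, hs, hrs⟩ := exists_lt_of_lt_csSup hne hr
    simp only [mem_ofPred_eq, hc] at hs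
    exact (hmono hrs.le).trans hs
  have hgt : ∀ r > v, p ≤ ProbabilityTheory.cdf μ r := fun r hr => by
    by_contra! h
    have : r ≤ v := le_csSup hbd (by simpa [hc] using h.le)
    linarith
  constructor
  · have h1 : μ (Iio v) = ENNReal.ofReal (Function.leftLim (ProbabilityTheory.cdf μ) v - 0) := by
      rw [← StieltjesFunction.measure_Iio _ (ProbabilityTheory.tendsto_cdf_atBot μ),
        ProbabilityTheory.measure_cdf]
    rw [measureReal_def, h1]
    refine ENNReal.toReal_le_of_le_ofReal hp.1.le (ENNReal.ofReal_le_ofReal ?_)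
    rw [sub_zero]
    refine le_of_tendsto (hmono.tendsto_leftLim v) ?_
    filter_upwards [self_mem_nhdsWithin] with r hr using hlt r hr
  · rw [← ProbabilityTheory.cdf_eq_real]
    have h := ((ProbabilityTheory.cdf μ).right_continuous v).mono Ioi_subset_Ici_self
    refine ge_of_tendsto h.tendsto ?_
    filter_upwards [self_mem_nhdsWithin] with r hr using hgt r hr

noncomputable def cvG (p : ℝ) (μ : Measure ℝ) (c : ℝ) : ℝ :=
  (∫ x in Iio c, x ∂μ) + (p - (μ (Iio c)).toReal) * c

theorem cvG_eq (p : ℝ) (μ : Measure ℝ) [IsProbabilityMeasure μ]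
    (hint : Integrable (fun x : ℝ => x) μ) (c : ℝ) :
    cvG p μ c = p * c - ∫ x, max (c - x) 0 ∂μ := by
  have h : (fun x : ℝ => max (c - x) 0) = (Iio c).indicator (fun x => c - x) := by
    ext x
    by_cases hx : x < c
    · rw [indicator_of_mem (mem_Iio.2 hx), max_eq_left (by linarith)]
    · rw [indicator_of_notMem (by simpa using hx), max_eq_right (by linarith)]
  rw [h, integral_indicator measurableSet_Iio,
    integral_sub (integrable_const _).integrableOn hint.integrableOn]
  simp [cvG, measureReal_def]
  ring

theorem cvG_le (p : ℝ) (hp : p ∈ Set.Ioo (0 : ℝ) 1) (μ : Measure ℝ) [IsProbabilityMeasure μ]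
    (hint : Integrable (fun x : ℝ => x) μ) (c : ℝ) :
    cvG p μ c ≤ cvG p μ (valueAtRisk p μ) := by
  obtain ⟨h1, h2⟩ := var_bounds μ p hp
  rw [cvG_eq p μ hint, cvG_eq p μ hint]
  set v := valueAtRisk p μ
  have hi : ∀ c : ℝ, Integrable (fun x : ℝ => max (c - x) 0) μ := fun c =>
    ((integrable_const c).sub hint).pos_part
  have key : ∀ S : Set ℝ, MeasurableSet S →
      (∀ x, S.indicator (fun _ => c - v) x ≤ max (c - x) 0 - max (v - x) 0) →
      μ.real S * (c - v) ≤ (∫ x, max (c - x) 0 ∂μ) - ∫ x, max (v - x) 0 ∂μ := by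
    intro S hS hx
    rw [← integral_sub (hi c) (hi v)]
    have := integral_mono ((integrable_const (c - v)).indicator hS) ((hi c).sub (hi v)) hx
    rw [integral_indicator hS] at this
    simpa using this
  rcases le_total v c with h | h
  · have := key (Iic v) measurableSet_Iic (fun x => by
      by_cases hx : x ≤ v
      · rw [indicator_of_mem (mem_Iic.2 hx), max_eq_left (by linarith), max_eq_left (by linarith)]
        linarith
      · rw [indicator_of_notMem (by simpa using hx), max_eq_right (a := v - x) (by linarith)]
        simp)
    nlinarith
  · have := key (Iio v) measurableSet_Iio (fun x => by
      by_cases hx : x < v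
      · rw [indicator_of_mem (mem_Iio.2 hx), max_eq_left (a := v - x) (by linarith)]
        linarith [le_max_left (c - x) 0]
      · rw [indicator_of_notMem (by simpa using hx), max_eq_right (a := v - x) (by linarith)]
        simp)
    nlinarith

/-- `CVaR_p` is convex with respect to mixtures of distributions:
`CVaR_p(λ·μ₁ + (1−λ)·μ₂) ≤ λ·CVaR_p(μ₁) + (1−λ)·CVaR_p(μ₂)`. -/
theorem cvar_mixture_convex
    (μ₁ μ₂ : Measure ℝ) [IsProbabilityMeasure μ₁] [IsProbabilityMeasure μ₂]
    (hint₁ : Integrable (fun x : ℝ => x) μ₁)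
    (hint₂ : Integrable (fun x : ℝ => x) μ₂)
    (l : ℝ) (hl : l ∈ Set.Icc (0 : ℝ) 1)
    (p : ℝ) (hp : p ∈ Set.Ioo (0 : ℝ) 1) :
    cvar p (ENNReal.ofReal l • μ₁ + ENNReal.ofReal (1 - l) • μ₂) ≤
      l * cvar p μ₁ + (1 - l) * cvar p μ₂ := by
  set μ := ENNReal.ofReal l • μ₁ + ENNReal.ofReal (1 - l) • μ₂ with hμ
  have hl0 := hl.1
  have hl1 : 0 ≤ 1 - l := by linarith [hl.2]
  have hprob : IsProbabilityMeasure μ := ⟨by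
    simp only [hμ, Measure.add_apply, Measure.smul_apply, measure_univ, smul_eq_mul, mul_one]
    rw [← ENNReal.ofReal_add hl0 hl1]
    simp⟩
  have hi₁ : ∀ f : ℝ → ℝ, Integrable f μ₁ → Integrable f (ENNReal.ofReal l • μ₁) :=
    fun f hf => hf.smul_measure ENNReal.ofReal_ne_top
  have hi₂ : ∀ f : ℝ → ℝ, Integrable f μ₂ → Integrable f (ENNReal.ofReal (1 - l) • μ₂) :=
    fun f hf => hf.smul_measure ENNReal.ofReal_ne_top
  have hint : Integrable (fun x : ℝ => x) μ := (hi₁ _ hint₁).add_measure (hi₂ _ hint₂)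
  have hlin : ∀ c, cvG p μ c = l * cvG p μ₁ c + (1 - l) * cvG p μ₂ c := by
    intro c
    rw [cvG_eq p μ hint, cvG_eq p μ₁ hint₁, cvG_eq p μ₂ hint₂, hμ,
      integral_add_measure (hi₁ (fun x => max (c - x) 0) ((integrable_const c).sub hint₁).pos_part)
        (hi₂ (fun x => max (c - x) 0) ((integrable_const c).sub hint₂).pos_part),
      integral_smul_measure, integral_smul_measure, ENNReal.toReal_ofReal hl0,
      ENNReal.toReal_ofReal hl1, smul_eq_mul, smul_eq_mul]
    ring
  have hcv : ∀ ν : Measure ℝ, cvar p ν = (1 / p) * cvG p ν (valueAtRisk p ν) := fun ν => rfl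
  have h1 := mul_le_mul_of_nonneg_left (cvG_le p hp μ₁ hint₁ (valueAtRisk p μ)) hl0
  have h2 := mul_le_mul_of_nonneg_left (cvG_le p hp μ₂ hint₂ (valueAtRisk p μ)) hl1
  have hp' : 0 ≤ 1 / p := by have := hp.1; positivity
  rw [hcv, hcv, hcv, hlin]
  have := mul_le_mul_of_nonneg_left (add_le_add h1 h2) hp'
  linarith
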